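/- arXiv:1609.02160 — 5 statements merged into one kernel-verified Lean document; each statement's English description precedes it below -/
import Mathlib

section
/- Second-order expansion of the Bhattacharyya coefficient (Eq. (toREP2) of the Supplement): let p : Fin m → ℝ satisfy p k > 0 for all k and ∑ k, p k = 1, and let v : Fin m → ℝ satisfy ∑ k, v k = 0. Then the limit, as ε → 0 with ε ≠ 0, of (8 · (1 − ∑ k, √(p k * (p k + ε * v k)))) / ε² equals ∑ k, (v k)² / p k. (This gives the quantum Fisher information B = ∑_k δp_k²/p_k for adaptive multiparameter noise estimation of generalized Pauli channels.) -/
/-!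
Since `∑ p = 1` and `∑ v = 0`, one has `1 - ∑ √(p (p + ε v)) = ∑ (p + ε v / 2 - √(p (p + ε v)))`,
and for `ε` small each summand is half the square of `√p - √(p + ε v)`. Rationalizing,
`√(p + ε v) - √p = ε v / (√p + √(p + ε v))`, so the quotient equals
`∑ 4 v² / (√p + √(p + ε v))²` exactly (`eight_mul_half_sq_sqrt_sub`). This is continuous at `ε = 0`,
where its value is `∑ v² / p`.
-/

open Filter Topology

/-- The left side is `4 (√p - √(p + x))²`, as `p + x / 2` is the arithmetic mean of `p` and `p + x`
and the root is their geometric mean; the right side is its rationalized form. -/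
theorem eight_mul_half_sq_sqrt_sub {p x : ℝ} (hp : 0 < p) (hx : 0 ≤ p + x) :
    8 * (p + x / 2 - √(p * (p + x))) = 4 * x ^ 2 / (√p + √(p + x)) ^ 2 := by
  have ha : 0 < √p := Real.sqrt_pos.2 hp
  have hb : 0 ≤ √(p + x) := Real.sqrt_nonneg _
  have hab : x = √(p + x) ^ 2 - √p ^ 2 := by
    rw [Real.sq_sqrt hx, Real.sq_sqrt hp.le]; ring
  have hl : p + x / 2 = (√p ^ 2 + √(p + x) ^ 2) / 2 := by
    rw [Real.sq_sqrt hx, Real.sq_sqrt hp.le]; ring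
  have hx2 : x ^ 2 = (√(p + x) ^ 2 - √p ^ 2) ^ 2 := congrArg (· ^ 2) hab
  rw [eq_div_iff (by positivity), Real.sqrt_mul hp.le, hl, hx2]
  ring

/-- Second-order expansion of the Bhattacharyya coefficient:
`8(1 − ∑ k √(p k (p k + ε v k)))/ε² → ∑ k (v k)²/(p k)` as `ε → 0`, `ε ≠ 0`. -/
theorem bhattacharyya_second_order {m : ℕ} (p v : Fin m → ℝ)
    (hp : ∀ k, 0 < p k) (hps : ∑ k, p k = 1) (hv : ∑ k, v k = 0) :
    Tendsto
      (fun ε : ℝ =>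
        (8 * (1 - ∑ k, Real.sqrt (p k * (p k + ε * v k)))) / ε ^ 2)
      (𝓝[≠] (0 : ℝ)) (𝓝 (∑ k, (v k) ^ 2 / p k)) := by
  have hlim : Tendsto (fun ε : ℝ => ∑ k, 4 * v k ^ 2 / (√(p k) + √(p k + ε * v k)) ^ 2)
      (𝓝[≠] (0 : ℝ)) (𝓝 (∑ k, (v k) ^ 2 / p k)) := by
    refine tendsto_finsetSum _ fun k _ => ?_
    have ha : 0 < √(p k) := Real.sqrt_pos.2 (hp k)
    have hc : ContinuousAt
        (fun ε : ℝ => 4 * v k ^ 2 / (√(p k) + √(p k + ε * v k)) ^ 2) 0 := by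
      refine ContinuousAt.div (by fun_prop) (by fun_prop) ?_
      positivity
    have h0 : 4 * v k ^ 2 / (√(p k) + √(p k + 0 * v k)) ^ 2 = v k ^ 2 / p k := by
      rw [zero_mul, add_zero, ← two_mul, mul_pow, Real.sq_sqrt (hp k).le]
      have := (hp k).ne'
      field_simp
      ring
    have ht := hc.tendsto
    rw [h0] at ht
    exact ht.mono_left nhdsWithin_le_nhds
  have hnonneg : ∀ᶠ ε : ℝ in 𝓝[≠] 0, ∀ k, 0 < p k + ε * v k := by
    refine eventually_all.2 fun k => ?_
    have hc : ContinuousAt (fun ε : ℝ => p k + ε * v k) 0 := by fun_prop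
    exact (hc.eventually (lt_mem_nhds (by simpa using hp k))).filter_mono nhdsWithin_le_nhds
  refine hlim.congr' ?_
  filter_upwards [hnonneg, self_mem_nhdsWithin] with ε hε hne
  have hne' : ε ≠ 0 := hne
  -- The linear term `ε v / 2` sums to zero, so it may be inserted for free.
  have hsum : 1 - ∑ k, √(p k * (p k + ε * v k))
      = ∑ k, (p k + ε * v k / 2 - √(p k * (p k + ε * v k))) := by
    rw [Finset.sum_sub_distrib, Finset.sum_add_distrib, ← Finset.sum_div, ← Finset.mul_sum,
      hps, hv]
    ring
  rw [hsum, Finset.mul_sum, Finset.sum_div]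
  refine Finset.sum_congr rfl fun k _ => ?_
  rw [eight_mul_half_sq_sqrt_sub (hp k) (hε k).le]
  have ha : 0 < √(p k) := Real.sqrt_pos.2 (hp k)
  have hb : 0 ≤ √(p k + ε * v k) := Real.sqrt_nonneg _
  field_simp
end

section
/- Adaptive QFI for the probability of a depolarizing, dephasing, or erasure channel equals 1/(p(1−p)): for any p with 0 < p < 1, the limit, as ε → 0 with ε ≠ 0, of (8 · (1 − √((1−p)·(1−p−ε)) − √(p·(p+ε)))) / ε² equals 1 / (p·(1−p)). (This is the quantity B(p) of the paper, yielding the asymptotically achievable bound Var(p) ≥ p(1−p)/n of Eq. (8).) -/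
open Filter Topology

/-!
Rationalising gives `a + x/2 - √(a(a+x)) = (x²/4) / (a + x/2 + √(a(a+x)))`
(`add_half_sub_sqrt`). Adding the cases `(a, x) = (p, ε)` and `(a, x) = (1 - p, -ε)`, the linear
terms cancel and the factor `ε²` comes out explicitly. For small `ε ≠ 0` the quotient
therefore agrees with a function continuous at `0`, whose value there is `2 (1/(2p) + 1/(2(1-p))) = 1/(p(1-p))`.
-/

lemma add_half_sub_sqrt {a x : ℝ} (ha : 0 < a) (hax : 0 < a + x) :
    a + x / 2 - √(a * (a + x)) = x ^ 2 / 4 / (a + x / 2 + √(a * (a + x))) := by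
  have hs := Real.sqrt_nonneg (a * (a + x))
  have hsq := Real.sq_sqrt (mul_pos ha hax).le
  have hd : 0 < a + x / 2 + √(a * (a + x)) := by linarith
  rw [eq_div_iff hd.ne']
  linear_combination -hsq

/-- Adaptive QFI for the error probability of a depolarizing, dephasing, or
erasure channel: `8(1 − √((1−p)(1−p−ε)) − √(p(p+ε)))/ε² → 1/(p(1−p))`. -/
theorem depolarizing_qfi (p : ℝ) (hp0 : 0 < p) (hp1 : p < 1) :
    Tendsto
      (fun ε : ℝ =>
        (8 * (1 - Real.sqrt ((1 - p) * (1 - p - ε)) - Real.sqrt (p * (p + ε)))) / ε ^ 2)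
      (𝓝[≠] (0 : ℝ)) (𝓝 (1 / (p * (1 - p)))) := by
  have hq : 0 < 1 - p := sub_pos.2 hp1
  have key : ∀ a : ℝ, 0 < a →
      Tendsto (fun x : ℝ => 2 / (a + x / 2 + √(a * (a + x)))) (𝓝 0) (𝓝 (1 / a)) := by
    intro a ha
    have hc : ContinuousAt (fun x : ℝ => 2 / (a + x / 2 + √(a * (a + x)))) 0 := by
      refine ContinuousAt.div (by fun_prop) (by fun_prop) ?_
      have := Real.sqrt_nonneg (a * (a + 0))
      simp only [zero_div, add_zero] at this ⊢
      linarith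
    have hv : 2 / (a + 0 / 2 + √(a * (a + 0))) = 1 / a := by
      rw [add_zero, Real.sqrt_mul_self ha.le]
      field_simp
      ring
    simpa only [hv] using hc.tendsto
  have hneg : Tendsto (fun ε : ℝ => -ε) (𝓝 0) (𝓝 0) := by
    simpa using (continuous_neg (G := ℝ)).tendsto 0
  have hlim := ((key p hp0).add ((key (1 - p) hq).comp hneg)).mono_left
    (nhdsWithin_le_nhds (s := {0}ᶜ))
  have hv : 1 / p + 1 / (1 - p) = 1 / (p * (1 - p)) := by
    field_simp
    ring
  rw [hv] at hlim
  refine hlim.congr' ?_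
  have hnear : ∀ᶠ ε : ℝ in 𝓝[≠] 0, ε ∈ Set.Ioo (-p) (1 - p) :=
    nhdsWithin_le_nhds (Ioo_mem_nhds (by linarith) hq)
  filter_upwards [hnear, self_mem_nhdsWithin] with ε hε hε0
  have hε0 : ε ≠ 0 := hε0
  have h1 := add_half_sub_sqrt hp0 (x := ε) (by linarith [hε.1])
  have h2 := add_half_sub_sqrt hq (x := -ε) (by linarith [hε.2])
  have hsum : 1 - √((1 - p) * (1 - p - ε)) - √(p * (p + ε)) =
      ε ^ 2 / 4 / (p + ε / 2 + √(p * (p + ε))) +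
        (-ε) ^ 2 / 4 / (1 - p + -ε / 2 + √((1 - p) * (1 - p + -ε))) := by
    rw [← h1, ← h2, ← sub_eq_add_neg (1 - p) ε]
    ring
  rw [hsum, eq_div_iff (pow_ne_zero 2 hε0)]
  simp only [Function.comp_apply]
  ring
end

section
/- Classical Chernoff bound for product distributions (used to obtain the upper bound p_err ≤ Q^n/2 in Eq. (14) for Pauli channels, whose Choi matrices commute): let p, q : Fin m → ℝ be probability vectors, let s ∈ [0,1], and let n ≥ 1. Then 1 − (1/2) · ∑_{x : Fin n → Fin m} |(∏ t, p (x t)) − (∏ t, q (x t))| ≤ (∑ k, (p k)^s * (q k)^(1−s))^n. -/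
/-!
For nonnegative reals, `min a b ≤ a ^ s * b ^ (1 - s)` whenever `0 ≤ s ≤ 1`. Since
`|a - b| = a + b - 2 * min a b`, for two probability vectors `P`, `Q` the quantity
`1 - (1 / 2) * ∑ |P - Q|` equals `∑ min P Q`, hence is at most `∑ P ^ s * Q ^ (1 - s)`. For product
distributions the last sum factors over the coordinates, which gives the `n`-th power.
-/

open Finset

/-- A minimum is at most any weighted geometric mean, in the form of a bound on `|a - b|`. -/
lemma add_sub_abs_sub_le_rpow_mul_rpow {a b s : ℝ} (ha : 0 ≤ a) (hb : 0 ≤ b)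
    (hs : s ∈ Set.Icc (0:ℝ) 1) :
    (1 / 2) * (a + b - |a - b|) ≤ a ^ s * b ^ (1 - s) := by
  have hs' : 0 ≤ 1 - s := sub_nonneg.2 hs.2
  have hc : 0 ≤ min a b := le_min ha hb
  calc (1 / 2) * (a + b - |a - b|) = min a b := by
        linarith [min_add_max a b, max_sub_min_eq_abs' a b]
    _ = min a b ^ s * min a b ^ (1 - s) := by
        rw [← Real.rpow_add_of_nonneg hc hs.1 hs', add_sub_cancel, Real.rpow_one]
    _ ≤ a ^ s * b ^ (1 - s) :=
        mul_le_mul (Real.rpow_le_rpow hc (min_le_left a b) hs.1)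
          (Real.rpow_le_rpow hc (min_le_right a b) hs') (Real.rpow_nonneg hc _)
          (Real.rpow_nonneg ha _)

/-- Classical Chernoff bound for product distributions:
`1 − (1/2) ∑_x |∏ p(x t) − ∏ q(x t)| ≤ (∑ k p k^s q k^(1−s))^n`. -/
theorem classical_chernoff_bound {m n : ℕ} (p q : Fin m → ℝ)
    (hp : ∀ k, 0 ≤ p k) (hps : ∑ k, p k = 1)
    (hq : ∀ k, 0 ≤ q k) (hqs : ∑ k, q k = 1)
    (s : ℝ) (hs : s ∈ Set.Icc (0:ℝ) 1) (hn : 1 ≤ n) :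
    1 - (1 / 2) * ∑ x : Fin n → Fin m, |(∏ t, p (x t)) - (∏ t, q (x t))| ≤
      (∑ k, p k ^ s * q k ^ (1 - s)) ^ n := by
  have factor (f : Fin m → ℝ) : ∑ x : Fin n → Fin m, ∏ t, f (x t) = (∑ k, f k) ^ n :=
    (Fintype.sum_pow f n).symm
  calc 1 - (1 / 2) * ∑ x : Fin n → Fin m, |(∏ t, p (x t)) - (∏ t, q (x t))|
      = ∑ x : Fin n → Fin m, (1 / 2) *
          ((∏ t, p (x t)) + (∏ t, q (x t)) - |(∏ t, p (x t)) - (∏ t, q (x t))|) := by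
        rw [← mul_sum, sum_sub_distrib, sum_add_distrib, factor p, factor q, hps, hqs, one_pow]
        ring
    _ ≤ ∑ x : Fin n → Fin m, (∏ t, p (x t)) ^ s * (∏ t, q (x t)) ^ (1 - s) :=
        sum_le_sum fun x _ => add_sub_abs_sub_le_rpow_mul_rpow
          (prod_nonneg fun t _ => hp (x t)) (prod_nonneg fun t _ => hq (x t)) hs
    _ = (∑ k, p k ^ s * q k ^ (1 - s)) ^ n := by
        rw [← factor]
        refine sum_congr rfl fun x _ => ?_
        rw [prod_mul_distrib, Real.finsetProd_rpow _ _ fun t _ => hp (x t),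
          Real.finsetProd_rpow _ _ fun t _ => hq (x t)]
end

section
/- Ultimate precision for estimating thermal noise in a thermal-loss or amplifier channel (Eq. (9) of the paper, via the Gaussian fidelity formula): define F(a, b) := √(2ab + a + b + 1 + 2√(a·b·(a+1)·(b+1))) / (a + b + 1) for a, b ≥ 0. Then for every n̄ > 0, the limit, as t → 0 with t ≠ 0, of (8 · (1 − F(n̄, n̄ + t))) / t² equals 1 / (n̄ · (n̄ + 1)). (F(a,b) is the fidelity between the asymptotic Choi matrices of two thermal-loss channels with equal transmissivity and thermal numbers a and b; the limit is the adaptive QFI, giving Var(n̄_T) ≥ n̄_T(n̄_T+1)/n.) -/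
/-!
The radicand is a perfect square, so that
`thermalFid a b = (√a √b + √(a+1) √(b+1)) / (a + b + 1)` and
`1 - thermalFid a b = ((√a - √b)² + (√(a+1) - √(b+1))²) / (2 (a + b + 1))`.
Rationalising `√x - √y = (x - y) / (√x + √y)` cancels the factor `(a - b)²` exactly and leaves a
function of `b` that is continuous at `a`; its value there is
`4 (1/(4a) + 1/(4(a+1))) / (2a + 1) = 1 / (a (a+1))`.
-/

open Filter Topology

/-- The fidelity between the asymptotic Choi matrices of two thermal-loss
(or amplifier) channels with equal gain and thermal numbers `a`, `b`. -/
noncomputable def thermalFid (a b : ℝ) : ℝ :=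
  Real.sqrt (2 * a * b + a + b + 1 + 2 * Real.sqrt (a * b * (a + 1) * (b + 1))) /
    (a + b + 1)

lemma thermalFid_eq {a b : ℝ} (ha : 0 ≤ a) (hb : 0 ≤ b) :
    thermalFid a b = (√a * √b + √(a + 1) * √(b + 1)) / (a + b + 1) := by
  have h1 : √(a * b * (a + 1) * (b + 1)) = √a * √b * √(a + 1) * √(b + 1) := by
    rw [Real.sqrt_mul (by positivity), Real.sqrt_mul (by positivity), Real.sqrt_mul ha]
  have h2 : 2 * a * b + a + b + 1 + 2 * (√a * √b * √(a + 1) * √(b + 1))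
      = (√a * √b + √(a + 1) * √(b + 1)) ^ 2 := by
    have e : (√a * √b + √(a + 1) * √(b + 1)) ^ 2 = √a ^ 2 * √b ^ 2
        + √(a + 1) ^ 2 * √(b + 1) ^ 2 + 2 * (√a * √b * √(a + 1) * √(b + 1)) := by ring
    rw [e, Real.sq_sqrt ha, Real.sq_sqrt hb, Real.sq_sqrt (by linarith : 0 ≤ a + 1),
      Real.sq_sqrt (by linarith : 0 ≤ b + 1)]
    ring
  rw [thermalFid, h1, h2, Real.sqrt_sq (by positivity)]

lemma sq_sqrt_sub_sqrt {x y : ℝ} (hx : 0 < x) (hy : 0 ≤ y) :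
    (√x - √y) ^ 2 = (y - x) ^ 2 / (√x + √y) ^ 2 := by
  have : 0 < √x := Real.sqrt_pos.2 hx
  have : 0 < √x + √y := by positivity
  rw [eq_div_iff (by positivity), ← mul_pow]
  have e : (√x - √y) * (√x + √y) = x - y := by
    have e' : (√x - √y) * (√x + √y) = √x ^ 2 - √y ^ 2 := by ring
    rw [e', Real.sq_sqrt hx.le, Real.sq_sqrt hy]
  rw [e]
  ring

/-- The infidelity with the factor `(b - a)²` extracted; the cofactor is regular at `b = a`. -/
lemma one_sub_thermalFid {a b : ℝ} (ha : 0 < a) (hb : 0 ≤ b) :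
    1 - thermalFid a b = (b - a) ^ 2 *
      (1 / (√a + √b) ^ 2 + 1 / (√(a + 1) + √(b + 1)) ^ 2) / (2 * (a + b + 1)) := by
  have h1 := sq_sqrt_sub_sqrt ha hb
  have h2 := sq_sqrt_sub_sqrt (by linarith : 0 < a + 1) (by linarith : 0 ≤ b + 1)
  have h3 : (b - a) ^ 2 * (1 / (√a + √b) ^ 2 + 1 / (√(a + 1) + √(b + 1)) ^ 2)
      = (√a - √b) ^ 2 + (√(a + 1) - √(b + 1)) ^ 2 := by
    rw [h1, h2]; ring
  have hs : a + b + 1 ≠ 0 := by positivity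
  rw [h3, thermalFid_eq ha.le hb]
  field_simp
  linarith [Real.sq_sqrt ha.le, Real.sq_sqrt hb, Real.sq_sqrt (by linarith : 0 ≤ a + 1),
    Real.sq_sqrt (by linarith : 0 ≤ b + 1)]

/-- Ultimate precision for estimating thermal noise:
`8(1 − F(nbar, nbar+t))/t² → 1/(nbar(nbar+1))` as `t → 0`, `t ≠ 0`. -/
theorem thermal_noise_qfi (nbar : ℝ) (hn : 0 < nbar) :
    Tendsto (fun t : ℝ => (8 * (1 - thermalFid nbar (nbar + t))) / t ^ 2)
      (𝓝[≠] (0 : ℝ)) (𝓝 (1 / (nbar * (nbar + 1)))) := by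
  have hcont : ContinuousAt (fun t : ℝ =>
      4 * (1 / (√nbar + √(nbar + t)) ^ 2 + 1 / (√(nbar + 1) + √(nbar + t + 1)) ^ 2) /
        (nbar + (nbar + t) + 1)) 0 := by
    have : 0 < √nbar := Real.sqrt_pos.2 hn
    have : 0 < √(nbar + 1) := Real.sqrt_pos.2 (by linarith)
    refine ContinuousAt.div₀ (.mul (by fun_prop) (.add (.div₀ (by fun_prop) (by fun_prop) ?_)
      (.div₀ (by fun_prop) (by fun_prop) ?_))) (by fun_prop) ?_ <;> positivity
  have hlim := hcont.tendsto.mono_left (nhdsWithin_le_nhds (s := {0}ᶜ))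
  have hval : 4 * (1 / (√nbar + √(nbar + 0)) ^ 2 + 1 / (√(nbar + 1) + √(nbar + 0 + 1)) ^ 2) /
      (nbar + (nbar + 0) + 1) = 1 / (nbar * (nbar + 1)) := by
    have hn1 : 0 < nbar + 1 := by linarith
    have hn2 : nbar + nbar + 1 ≠ 0 := by positivity
    rw [add_zero, ← two_mul, ← two_mul, mul_pow, mul_pow, Real.sq_sqrt hn.le,
      Real.sq_sqrt hn1.le]
    field_simp
    ring
  rw [hval] at hlim
  refine hlim.congr' ?_
  -- The factorisation requires `nbar + t ≥ 0`, which holds only for `t` near `0`.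
  have hnear : ∀ᶠ t : ℝ in 𝓝[≠] 0, -nbar < t :=
    nhdsWithin_le_nhds (lt_mem_nhds (by linarith))
  filter_upwards [hnear, self_mem_nhdsWithin] with t ht ht0
  have ht0' : t ≠ 0 := ht0
  have hs : nbar + (nbar + t) + 1 ≠ 0 := by linarith
  rw [one_sub_thermalFid hn (by linarith : 0 ≤ nbar + t), add_sub_cancel_left]
  generalize 1 / (√nbar + √(nbar + t)) ^ 2 + 1 / (√(nbar + 1) + √(nbar + t + 1)) ^ 2 = c
  field_simp
  ring
end

section
/- Infinitesimal thermal discrimination exponent (giving p_err ≃ e^{−nΣ}/2 with Σ = dn̄_T²/[8 n̄_T(n̄_T+1)]): for every n̄ > 0, the limit, as t → 0 with t ≠ 0 and n̄ + t > 0, of (8 · (1 − (√((n̄+1)·(n̄+1+t)) − √(n̄·(n̄+t)))⁻¹)) / t² equals 1 / (n̄·(n̄+1)). (The quantity (√((n̄+1)(n̄+1+t)) − √(n̄(n̄+t)))⁻¹ is the Bhattacharyya coefficient ∑_k √(p_k q_k) of two geometric distributions with means n̄ and n̄+t, which equals the quantum Chernoff bound Q for the corresponding commuting asymptotic Choi matrices.)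 -/
open Filter Topology

/-! Write `A = √((n+1)(n+1+t))` and `B = √(n(n+t))`. Rationalising twice gives
`A - B - 1 = (2n + t - 2B) / (A + 1 + B) = t² / ((A + 1 + B)(2n + t + 2B))`,
so for `t ≠ 0` the quotient equals `8 / ((A - B)(A + 1 + B)(2n + t + 2B))`. This is continuous
at `t = 0`, where `A = n + 1` and `B = n`, with value `8 / ((2n + 2)(4n)) = 1 / (n(n+1))`. -/

/-- Infinitesimal thermal discrimination exponent:
`8(1 − (√((nbar+1)(nbar+1+t)) − √(nbar(nbar+t)))⁻¹)/t² → 1/(nbar(nbar+1))`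
as `t → 0` with `t ≠ 0` and `nbar + t > 0`. -/
theorem infinitesimal_thermal_discrimination (nbar : ℝ) (hn : 0 < nbar) :
    Tendsto
      (fun t : ℝ =>
        (8 * (1 - (Real.sqrt ((nbar + 1) * (nbar + 1 + t)) -
            Real.sqrt (nbar * (nbar + t)))⁻¹)) / t ^ 2)
      (𝓝[{t : ℝ | t ≠ 0 ∧ 0 < nbar + t}] (0 : ℝ))
      (𝓝 (1 / (nbar * (nbar + 1)))) := by
  set A : ℝ → ℝ := fun t => Real.sqrt ((nbar + 1) * (nbar + 1 + t)) with hA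
  set B : ℝ → ℝ := fun t => Real.sqrt (nbar * (nbar + t)) with hB
  have hA0 : A 0 = nbar + 1 := by
    simp only [hA, add_zero]
    exact Real.sqrt_mul_self (by linarith)
  have hB0 : B 0 = nbar := by
    simp only [hB, add_zero]
    exact Real.sqrt_mul_self hn.le
  have hcont : ContinuousAt
      (fun t => 8 / ((A t - B t) * (A t + 1 + B t) * (2 * nbar + t + 2 * B t))) 0 := by
    have hAc : Continuous A := by fun_prop
    have hBc : Continuous B := by fun_prop
    refine ContinuousAt.div (by fun_prop) (by fun_prop) ?_
    rw [hA0, hB0]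
    have : 0 < (nbar + 1 - nbar) * (nbar + 1 + 1 + nbar) * (2 * nbar + 0 + 2 * nbar) := by
      ring_nf
      positivity
    exact this.ne'
  have hval : 8 / ((A 0 - B 0) * (A 0 + 1 + B 0) * (2 * nbar + 0 + 2 * B 0))
      = 1 / (nbar * (nbar + 1)) := by
    rw [hA0, hB0, add_sub_cancel_left]
    have h1 : nbar + 1 + 1 + nbar = 2 * (nbar + 1) := by ring
    have h2 : 2 * nbar + 0 + 2 * nbar = 4 * nbar := by ring
    rw [h1, h2]
    field_simp
    norm_num
  have hlim := hcont.tendsto.mono_left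
    (nhdsWithin_le_nhds (s := {t : ℝ | t ≠ 0 ∧ 0 < nbar + t}))
  rw [hval] at hlim
  refine hlim.congr' ?_
  filter_upwards [self_mem_nhdsWithin] with t ht
  obtain ⟨ht0, htp⟩ := ht
  change _ = 8 * (1 - (A t - B t)⁻¹) / t ^ 2
  have hAsq : A t ^ 2 = (nbar + 1) * (nbar + 1 + t) := Real.sq_sqrt (by nlinarith)
  have hBsq : B t ^ 2 = nbar * (nbar + t) := Real.sq_sqrt (by positivity)
  have hAnn : 0 ≤ A t := Real.sqrt_nonneg _
  have hBnn : 0 ≤ B t := Real.sqrt_nonneg _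
  have hD : 0 < A t - B t := by
    have : B t < A t := Real.sqrt_lt_sqrt (by positivity) (by nlinarith)
    linarith
  have hS : 0 < A t + 1 + B t := by linarith
  have hR : 0 < 2 * nbar + t + 2 * B t := by linarith
  have key : (A t - B t - 1) * (A t + 1 + B t) * (2 * nbar + t + 2 * B t) = t ^ 2 := by
    have h1 : (A t - B t - 1) * (A t + 1 + B t) = 2 * nbar + t - 2 * B t := by
      linear_combination hAsq - hBsq
    rw [h1]
    linear_combination (-4) * hBsq
  have hinv : 1 - (A t - B t)⁻¹ = (A t - B t - 1) / (A t - B t) := by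
    rw [sub_div, div_self hD.ne', one_div]
  rw [hinv, ← mul_div_assoc, div_div, div_eq_div_iff (by positivity) (by positivity), ← key]
  ring
end
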